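/- arXiv:1805.04782 — 9 statements merged into one kernel-verified Lean document; each statement's English description precedes it below -/
import Mathlib

section
/- Let D ⊆ ℝ be open, let f : D → ℝ satisfy a local Lipschitz condition on D, let T > 0, and let y : [0,T] → D be differentiable with y'(t) = f(y(t)) for all t ∈ [0,T] and y(0) = y₀. Let K ⊆ D be compact with y([0,T]) contained in the interior of K, let h₀ > 0, and let Φ : [0,h₀] × K → ℝ be continuous such that: (Consistency) Φ(0,y) = y for all y ∈ K, the partial derivative ∂Φ/∂h exists and is continuous on [0,h₀] × K, and ∂Φ/∂h(0,y) = f(y) for all y ∈ K; (Lipschitz) there is L > 0 with |∂Φ/∂h(h,y) − ∂Φ/∂h(h,y')| ≤ L|y − y'| for all h ∈ [0,h₀] and y, y' ∈ K; (Local truncation error) there are p ≥ 1 and C ≥ 0 with |y(t+h) − Φ(h,y(t))| ≤ C h^{p+1} whenever t ∈ [0,T], 0 ≤ h ≤ h₀ and t + h ≤ T. Then there exists N₀ ∈ ℕ such that for every N ≥ N₀, setting h = T/N, the sequence defined by y₀⁽ᴺ⁾ = y₀ and y_{n+1}⁽ᴺ⁾ = Φ(h, y_n⁽ᴺ⁾)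 for n = 0,…,N−1 is well defined, each y_n⁽ᴺ⁾ lies in the interior of K, and max_{0 ≤ n ≤ N} |y(nh) − y_n⁽ᴺ⁾| ≤ M h^p with M = (C/L)(e^{LT} − 1). -/
open Set

/-- Convergence of abstract explicit one-step methods of order `p` with equidistant step
size `h = T/N` for the autonomous scalar IVP `y' = f(y)`, `y(0) = y₀` on `[0,T]`:
under consistency, a Lipschitz condition for `∂Φ/∂h`, and a local truncation error bound
`C h^{p+1}`, the global error is at most `M h^p` with `M = (C/L)(e^{LT} − 1)`. -/
theorem one_step_method_convergence
    (D : Set ℝ) (hD : IsOpen D)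
    (f : ℝ → ℝ)
    (hf : ∀ x ∈ D, ∃ s ∈ nhds x, ∃ L : NNReal, LipschitzOnWith L f s)
    (T : ℝ) (hT : 0 < T)
    (y : ℝ → ℝ) (y₀ : ℝ)
    (hyD : ∀ t ∈ Icc (0 : ℝ) T, y t ∈ D)
    (hy : ∀ t ∈ Icc (0 : ℝ) T, HasDerivWithinAt y (f (y t)) (Icc (0 : ℝ) T) t)
    (hy0 : y 0 = y₀)
    (K : Set ℝ) (hK : IsCompact K) (hKD : K ⊆ D)
    (hyK : y '' Icc (0 : ℝ) T ⊆ interior K)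
    (h₀ : ℝ) (hh₀ : 0 < h₀)
    (Φ : ℝ → ℝ → ℝ)
    (hΦcont : ContinuousOn (fun q : ℝ × ℝ => Φ q.1 q.2) (Icc (0 : ℝ) h₀ ×ˢ K))
    -- Consistency
    (Φ' : ℝ → ℝ → ℝ)
    (hΦ0 : ∀ z ∈ K, Φ 0 z = z)
    (hΦ' : ∀ z ∈ K, ∀ h ∈ Icc (0 : ℝ) h₀,
      HasDerivWithinAt (fun s => Φ s z) (Φ' h z) (Icc (0 : ℝ) h₀) h)
    (hΦ'cont : ContinuousOn (fun q : ℝ × ℝ => Φ' q.1 q.2) (Icc (0 : ℝ) h₀ ×ˢ K))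
    (hΦ'0 : ∀ z ∈ K, Φ' 0 z = f z)
    -- Lipschitz condition
    (L : ℝ) (hL : 0 < L)
    (hLip : ∀ h ∈ Icc (0 : ℝ) h₀, ∀ z ∈ K, ∀ z' ∈ K,
      |Φ' h z - Φ' h z'| ≤ L * |z - z'|)
    -- Local truncation error
    (p : ℝ) (hp : 1 ≤ p) (C : ℝ) (hC : 0 ≤ C)
    (hLTE : ∀ t ∈ Icc (0 : ℝ) T, ∀ h : ℝ, 0 ≤ h → h ≤ h₀ → t + h ≤ T →
      |y (t + h) - Φ h (y t)| ≤ C * h ^ (p + 1)) :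
    ∃ N₀ : ℕ, 0 < N₀ ∧ ∀ N : ℕ, N₀ ≤ N →
      ∀ seq : ℕ → ℝ, seq 0 = y₀ → (∀ n < N, seq (n + 1) = Φ (T / N) (seq n)) →
        ∀ n ≤ N, seq n ∈ interior K ∧
          |y (n * (T / N)) - seq n| ≤ C / L * (Real.exp (L * T) - 1) * (T / N) ^ p := by
  have hyc : ContinuousOn y (Icc (0 : ℝ) T) := fun t ht => (hy t ht).continuousWithinAt
  have hcomp : IsCompact (y '' Icc (0 : ℝ) T) := isCompact_Icc.image_of_continuousOn hyc
  obtain ⟨δ, hδ, hδK⟩ := hcomp.exists_thickening_subset_open isOpen_interior hyK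
  have hlim : Filter.Tendsto (fun N : ℕ => T / (N : ℝ)) Filter.atTop (nhds 0) :=
    tendsto_const_div_atTop_nhds_zero_nat T
  have hlim2 : Filter.Tendsto
      (fun N : ℕ => C / L * (Real.exp (L * T) - 1) * (T / (N : ℝ)) ^ p)
      Filter.atTop (nhds 0) := by
    have h1 := (hlim.rpow_const (p := p) (Or.inr (by linarith))).const_mul
      (C / L * (Real.exp (L * T) - 1))
    rwa [Real.zero_rpow (by linarith), mul_zero] at h1
  obtain ⟨N₁, hN₁⟩ := Filter.eventually_atTop.1
    ((hlim.eventually (gt_mem_nhds hh₀)).and (hlim2.eventually (gt_mem_nhds hδ)))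
  refine ⟨N₁ + 1, Nat.succ_pos _, fun N hN seq hs0 hs => ?_⟩
  obtain ⟨hh, hM⟩ := hN₁ N (by omega)
  have hNpos : (0 : ℝ) < N := by exact_mod_cast (show 0 < N by omega)
  have hhpos : 0 < T / (N : ℝ) := div_pos hT hNpos
  have hNh : (N : ℝ) * (T / N) = T := by field_simp
  generalize T / (N : ℝ) = h at *
  have hmem : ∀ n ≤ N, (n : ℝ) * h ∈ Icc (0 : ℝ) T := by
    intro n hn
    have hn' : (n : ℝ) ≤ N := by exact_mod_cast hn
    refine ⟨by positivity, ?_⟩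
    rw [← hNh]
    gcongr
  have hpos : 0 < h ^ p := Real.rpow_pos_of_pos hhpos p
  have hCL : 0 ≤ C / L := by positivity
  -- stability
  have hstab : ∀ z ∈ K, ∀ z' ∈ K, |Φ h z - Φ h z'| ≤ (1 + L * h) * |z - z'| := by
    intro z hz z' hz'
    have h1 := (convex_Icc (0 : ℝ) h₀).norm_image_sub_le_of_norm_hasDerivWithin_le
      (f := fun s => Φ s z - Φ s z') (f' := fun s => Φ' s z - Φ' s z')
      (C := L * |z - z'|) (x := 0) (y := h)
      (fun s hs => (hΦ' z hz s hs).sub (hΦ' z' hz' s hs))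
      (fun s hs => by simpa [Real.norm_eq_abs] using hLip s hs z hz z' hz')
      ⟨le_rfl, hh₀.le⟩ ⟨hhpos.le, hh.le⟩
    simp only [hΦ0 z hz, hΦ0 z' hz', Real.norm_eq_abs, sub_zero, abs_of_pos hhpos] at h1
    have h2 := abs_sub_abs_le_abs_sub (Φ h z - Φ h z') (z - z')
    linarith
  have key : ∀ n ≤ N, seq n ∈ interior K ∧
      |y (n * h) - seq n| ≤ C / L * (Real.exp (L * (n * h)) - 1) * h ^ p := by
    have hin : ∀ n ≤ N, |y (n * h) - seq n| ≤ C / L * (Real.exp (L * (n * h)) - 1) * h ^ p →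
        seq n ∈ interior K := by
      intro n hn hb
      apply hδK
      rw [Metric.mem_thickening_iff]
      refine ⟨_, mem_image_of_mem y (hmem n hn), ?_⟩
      rw [dist_comm, Real.dist_eq]
      refine (hb.trans ?_).trans_lt hM
      have := (hmem n hn).2
      gcongr
    intro n
    induction n with
    | zero =>
      intro hn
      have hb : |y ((0 : ℕ) * h) - seq 0| ≤
          C / L * (Real.exp (L * ((0 : ℕ) * h)) - 1) * h ^ p := by
        simp [hs0, hy0]
      exact ⟨hin 0 hn hb, hb⟩
    | succ n ih =>
      intro hn
      obtain ⟨hK1, hb1⟩ := ih (by omega)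
      have hm := hmem n (by omega)
      have hm1 := hmem (n + 1) hn
      have hcast : ((n + 1 : ℕ) : ℝ) * h = n * h + h := by push_cast; ring
      have hb : |y ((n + 1 : ℕ) * h) - seq (n + 1)| ≤
          C / L * (Real.exp (L * ((n + 1 : ℕ) * h)) - 1) * h ^ p := by
        rw [hcast] at hm1 ⊢
        rw [hs n (by omega)]
        have e1 := hLTE _ hm h hhpos.le hh.le hm1.2
        have e2 := hstab _ (interior_subset (hyK (mem_image_of_mem y hm))) _
          (interior_subset hK1)
        have e3 := abs_sub_le (y (n * h + h)) (Φ h (y (n * h))) (Φ h (seq n))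
        rw [Real.rpow_add hhpos, Real.rpow_one] at e1
        have e4 : (1 + L * h) * |y (n * h) - seq n| ≤
            (1 + L * h) * (C / L * (Real.exp (L * (n * h)) - 1) * h ^ p) := by
          gcongr
        have e5 : (1 + L * h) * Real.exp (L * (n * h)) ≤ Real.exp (L * (n * h + h)) := by
          rw [mul_add, Real.exp_add, mul_comm]
          have := Real.add_one_le_exp (L * h)
          gcongr
          linarith
        have e6 : (1 + L * h) * (C / L * (Real.exp (L * (n * h)) - 1) * h ^ p)
            + C * (h ^ p * h) =
            C / L * ((1 + L * h) * Real.exp (L * (n * h)) - 1) * h ^ p := by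
          field_simp
          ring
        have e7 : C / L * ((1 + L * h) * Real.exp (L * (n * h)) - 1) * h ^ p ≤
            C / L * (Real.exp (L * (n * h + h)) - 1) * h ^ p := by
          gcongr
        linarith
      exact ⟨hin _ hn hb, hb⟩
  intro n hn
  obtain ⟨h1, h2⟩ := key n hn
  refine ⟨h1, h2.trans ?_⟩
  have := (hmem n hn).2
  gcongr
end

section
/- Let r ∈ ℕ₀, let D ⊆ ℝ be open, let f : D → ℝ be (r+1)-times continuously differentiable, let T > 0, and let y : [0,T] → D solve y'(t) = f(y(t)) on [0,T]. Let K ⊆ D be a compact set with y([0,T]) contained in the interior of K, let h₀ > 0, and let Φ : [0,h₀] × K → ℝ be such that for every y ∈ K the function h ↦ Φ(h,y) satisfies Φ(0,y) = y and ∂Φ/∂h(h,y) = Σ_{j=0}^{r} (f^{(j)}(y)/j!)(Φ(h,y) − y)^j for all h ∈ [0,h₀], and such that the partial derivative ∂^{r+2}Φ/∂h^{r+2} exists and is continuous on [0,h₀] × K. Then there exists a constant C ≥ 0, independent of t and h, such that |y(t+h) − Φ(h,y(t))| ≤ C h^{r+2} whenever t ∈ [0,T], 0 ≤ h ≤ h₀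 and t + h ≤ T. -/
open Finset Set

open Filter Topology Asymptotics

lemma aux_mv {d d' : ℝ → ℝ} {η : ℝ} (hη : 0 < η) (k : ℕ)
    (hd : ∀ s ∈ Icc (0 : ℝ) η, HasDerivWithinAt d (d' s) (Icc (0 : ℝ) η) s)
    (h0 : d 0 = 0) (h0' : d' 0 = 0)
    (hO : d' =O[𝓝[>] (0 : ℝ)] fun s => s ^ k) :
    d =O[𝓝[>] (0 : ℝ)] fun s => s ^ (k + 1) := by
  obtain ⟨C, hC, hb⟩ := hO.exists_nonneg
  rw [IsBigOWith, eventually_nhdsWithin_iff, Metric.eventually_nhds_iff] at hb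
  obtain ⟨δ, hδ, hb⟩ := hb
  refine IsBigO.of_bound C ?_
  rw [eventually_nhdsWithin_iff, Metric.eventually_nhds_iff]
  refine ⟨min δ η, lt_min hδ hη, ?_⟩
  intro s hs hs0
  have hs0 : 0 < s := hs0
  rw [Real.dist_eq, sub_zero, abs_of_pos hs0] at hs
  have hs1 := hs.trans_le (min_le_left _ _)
  have hs2 := hs.trans_le (min_le_right _ _)
  have hsub : Icc (0 : ℝ) s ⊆ Icc 0 η := Icc_subset_Icc_right hs2.le
  have := Convex.norm_image_sub_le_of_norm_hasDerivWithin_le (C := C * s ^ k) (f := d) (f' := d')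
    (s := Icc (0 : ℝ) s) (x := 0) (y := s)
    (fun x hx => (hd x (hsub hx)).mono hsub) ?_ (convex_Icc _ _)
    (left_mem_Icc.2 hs0.le) (right_mem_Icc.2 hs0.le)
  · rw [h0, sub_zero, sub_zero] at this
    rw [norm_pow, pow_succ, ← mul_assoc]
    simpa [abs_of_pos hs0] using this
  · intro x hx
    rcases hx.1.eq_or_lt with h | h
    · rw [← h, h0', norm_zero]; positivity
    · have h3 := hb (y := x) (by rw [Real.dist_eq, sub_zero, abs_of_pos h]; linarith [hx.2]) h
      refine h3.trans ?_
      rw [norm_pow, Real.norm_eq_abs, abs_of_pos h]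
      have := hx.2
      gcongr

lemma aux_ode (r : ℕ) (c : ℕ → ℝ) (z η : ℝ) (hη : 0 < η) (f u w : ℝ → ℝ)
    (hu : ∀ s ∈ Icc (0 : ℝ) η, HasDerivWithinAt u (f (u s)) (Icc (0 : ℝ) η) s)
    (hw : ∀ s ∈ Icc (0 : ℝ) η, HasDerivWithinAt w
      (∑ j ∈ range (r + 1), c j * (w s - z) ^ j) (Icc (0 : ℝ) η) s)
    (hu0 : u 0 = z) (hw0 : w 0 = z)
    (hf : (fun x => f x - ∑ j ∈ range (r + 1), c j * (x - z) ^ j) =O[𝓝 z]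
      fun x => (x - z) ^ (r + 1)) :
    (fun s => u s - w s) =O[𝓝[>] (0 : ℝ)] fun s => s ^ (r + 2) := by
  set P : ℝ → ℝ := fun x => ∑ j ∈ range (r + 1), c j * (x - z) ^ j with hP
  have hmem : (0 : ℝ) ∈ Icc (0 : ℝ) η := left_mem_Icc.2 hη.le
  have hle : 𝓝[>] (0 : ℝ) ≤ 𝓝[Icc 0 η] 0 := by
    rw [← nhdsWithin_Ioc_eq_nhdsGT hη]
    exact nhdsWithin_mono _ Ioc_subset_Icc_self
  have hut : Tendsto u (𝓝[>] 0) (𝓝 z) := by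
    have := (hu 0 hmem).continuousWithinAt.tendsto.mono_left hle
    rwa [hu0] at this
  have hwt : Tendsto w (𝓝[>] 0) (𝓝 z) := by
    have := (hw 0 hmem).continuousWithinAt.tendsto.mono_left hle
    rwa [hw0] at this
  have huz : (fun s => u s - z) =O[𝓝[>] (0 : ℝ)] fun s => s := by
    have := ((hu 0 hmem).hasFDerivWithinAt.isBigO_sub).mono hle
    simpa [hu0] using this
  have h1 : (fun s => f (u s) - P (u s)) =O[𝓝[>] (0 : ℝ)] fun s => s ^ (r + 1) :=
    (hf.comp_tendsto hut).trans (huz.pow (r + 1))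
  have hPd : ContDiff ℝ 1 P := by
    rw [hP]; fun_prop
  have h2 : (fun s => P (u s) - P (w s)) =O[𝓝[>] (0 : ℝ)] fun s => u s - w s := by
    have h3 := (hPd.contDiffAt (x := z)).hasStrictFDerivAt (by norm_num)
    exact h3.isBigO_sub.comp_tendsto (hut.prodMk_nhds hwt)
  have hPz : f z - P z = 0 := by
    obtain ⟨C, hC⟩ := hf.bound
    have := hC.self_of_nhds
    simpa [hP] using this
  have key : ∀ k ≤ r + 2, (fun s => u s - w s) =O[𝓝[>] (0 : ℝ)] fun s => s ^ k := by
    intro k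
    induction k with
    | zero =>
      intro _
      simpa using (hut.sub hwt).isBigO_one ℝ
    | succ k ih =>
      intro hk
      have ih := ih (by omega)
      refine aux_mv hη k (d' := fun s => f (u s) - P (w s))
        (fun s hs => (hu s hs).sub (hw s hs)) (by simp [hu0, hw0]) (by simp [hu0, hw0, hPz]) ?_
      have h4 : (fun s : ℝ => s ^ (r + 1)) =O[𝓝[>] (0 : ℝ)] fun s => s ^ k :=
        by
          refine IsBigO.of_bound 1 ?_
          filter_upwards [Ioc_mem_nhdsGT (zero_lt_one' ℝ)] with s hs
          rw [norm_pow, norm_pow, Real.norm_eq_abs, abs_of_pos hs.1, one_mul]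
          exact pow_le_pow_of_le_one hs.1.le hs.2 (by omega)
      have := (h1.trans h4).add (h2.trans ih)
      simpa using this
  exact key _ le_rfl

lemma aux_poly (n : ℕ) : ∀ c : ℕ → ℝ,
    (fun s : ℝ => ∑ k ∈ range n, c k * s ^ k) =O[𝓝[>] (0 : ℝ)] (fun s => s ^ n) →
    ∀ k < n, c k = 0 := by
  induction n with
  | zero => intro c _ k hk; omega
  | succ n ih =>
    intro c h
    have hc0 : c 0 = 0 := by
      have h1 : Tendsto (fun s : ℝ => ∑ k ∈ range (n + 1), c k * s ^ k) (𝓝[>] 0) (𝓝 (c 0)) := by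
        have : Continuous (fun s : ℝ => ∑ k ∈ range (n + 1), c k * s ^ k) := by fun_prop
        have := (this.tendsto 0).mono_left (nhdsWithin_le_nhds (s := Ioi 0))
        simpa [Finset.sum_range_succ'] using this
      have h2 : Tendsto (fun s : ℝ => s ^ (n + 1)) (𝓝[>] 0) (𝓝 0) := by
        have : Continuous (fun s : ℝ => s ^ (n + 1)) := by fun_prop
        have := (this.tendsto 0).mono_left (nhdsWithin_le_nhds (s := Ioi 0))
        simpa using this
      exact tendsto_nhds_unique h1 (h.trans_tendsto h2)
    have h3 := ih (fun k => c (k + 1)) ?_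
    · intro k hk
      cases k with
      | zero => exact hc0
      | succ k => exact h3 k (by omega)
    · have h4 := (isBigO_refl (fun s : ℝ => s⁻¹) (𝓝[>] (0 : ℝ))).mul h
      refine h4.congr' ?_ ?_
      · filter_upwards [self_mem_nhdsWithin] with s hs
        have hs : s ≠ 0 := (mem_Ioi.1 hs).ne'
        rw [Finset.sum_range_succ', hc0, zero_mul, add_zero, Finset.mul_sum]
        refine Finset.sum_congr rfl fun k _ => ?_
        field_simp
        ring
      · filter_upwards [self_mem_nhdsWithin] with s hs
        have hs : s ≠ 0 := (mem_Ioi.1 hs).ne'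
        field_simp
        ring

lemma aux_taylor (n : ℕ) (g : ℝ → ℝ) (a b M : ℝ) (hab : a ≤ b)
    (hg : ContDiffOn ℝ (n + 1) g (Icc a b))
    (hM : ∀ x ∈ Icc a b, |iteratedDerivWithin (n + 1) g (Icc a b) x| ≤ M) :
    ∃ c : ℕ → ℝ, ∀ s, 0 ≤ s → a + s ≤ b →
      |g (a + s) - ∑ k ∈ range (n + 1), c k * s ^ k| ≤ M * s ^ (n + 1) := by
  refine ⟨fun k => (k.factorial : ℝ)⁻¹ * iteratedDerivWithin k g (Icc a b) a, fun s hs hsb => ?_⟩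
  have h := taylor_mean_remainder_bound hab hg (x := a + s) ⟨by linarith, hsb⟩ hM
  rw [taylor_within_apply, Real.norm_eq_abs, add_sub_cancel_left] at h
  have hM0 : 0 ≤ M := (abs_nonneg _).trans (hM a (left_mem_Icc.2 hab))
  have h5 : M * s ^ (n + 1) / (n.factorial : ℝ) ≤ M * s ^ (n + 1) :=
    div_le_self (by positivity) (by exact_mod_cast n.factorial_pos)
  refine le_trans (le_of_eq ?_) (h.trans h5)
  congr 2
  refine Finset.sum_congr rfl fun k _ => ?_
  simp only [smul_eq_mul]; ring

lemma aux_smooth (r : ℕ) (D : Set ℝ) (f : ℝ → ℝ) (hf : ContDiffOn ℝ (r + 1) f D)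
    (T : ℝ) (hT : 0 < T) (y : ℝ → ℝ)
    (hyD : ∀ t ∈ Icc (0 : ℝ) T, y t ∈ D)
    (hy : ∀ t ∈ Icc (0 : ℝ) T, HasDerivWithinAt y (f (y t)) (Icc (0 : ℝ) T) t) :
    ContDiffOn ℝ (r + 2) y (Icc (0 : ℝ) T) := by
  have hU := uniqueDiffOn_Icc hT
  have key : ∀ k : ℕ, k ≤ r + 2 → ContDiffOn ℝ k y (Icc (0 : ℝ) T) := by
    intro k
    induction k with
    | zero =>
      intro _
      exact contDiffOn_zero.2 fun t ht => (hy t ht).continuousWithinAt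
    | succ k ih =>
      intro hk
      push_cast
      rw [contDiffOn_succ_iff_derivWithin hU]
      refine ⟨fun t ht => (hy t ht).differentiableWithinAt, fun h => ?_, ?_⟩
      · exact absurd h (by simp)
      · have h1 : ContDiffOn ℝ k (f ∘ y) (Icc (0 : ℝ) T) :=
          (hf.of_le (by exact_mod_cast (by omega : k ≤ r + 1))).comp (ih (by omega)) hyD
        exact h1.congr fun t ht => (hy t ht).derivWithin (hU t ht)
  exact_mod_cast key (r + 2) le_rfl

lemma aux_f (r : ℕ) (D : Set ℝ) (hD : IsOpen D) (f : ℝ → ℝ) (hf : ContDiffOn ℝ (r + 1) f D)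
    (z : ℝ) (hz : z ∈ D) :
    (fun x => f x - ∑ j ∈ range (r + 1),
      iteratedDerivWithin j f D z / (Nat.factorial j) * (x - z) ^ j) =O[𝓝 z]
      fun x => (x - z) ^ (r + 1) := by
  obtain ⟨ε, hε, hb⟩ := Metric.isOpen_iff.1 hD z hz
  have hzb := Metric.mem_ball_self hε (x := z)
  have h := taylor_isLittleO (n := r + 1) (convex_ball z ε) hzb (by exact_mod_cast hf.mono hb)
  rw [Metric.isOpen_ball.nhdsWithin_eq hzb] at h
  have h2 := h.isBigO.add (((isBigO_refl (fun x : ℝ => (x - z) ^ (r + 1)) (𝓝 z))).const_mul_left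
    (((r + 1).factorial : ℝ)⁻¹ * iteratedDerivWithin (r + 1) f (Metric.ball z ε) z))
  refine h2.congr_left fun x => ?_
  rw [taylor_within_apply, Finset.sum_range_succ]
  have : ∀ j ∈ range (r + 1), iteratedDerivWithin j f D z / (Nat.factorial j) * (x - z) ^ j
      = ((Nat.factorial j : ℝ)⁻¹ * (x - z) ^ j) • iteratedDerivWithin j f (Metric.ball z ε) z := by
    intro j _
    rw [iteratedDerivWithin_of_isOpen hD hz, iteratedDerivWithin_of_isOpen Metric.isOpen_ball hzb,
      smul_eq_mul]
    ring
  rw [Finset.sum_congr rfl this]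
  simp only [smul_eq_mul]
  ring

/-- Local truncation error of the one-step method obtained by adaptively replacing `f` in
`y' = f(y)` by its `r`-th order Taylor polynomial and solving the resulting equation
exactly: the error over one step of size `h` is `O(h^{r+2})`, uniformly for `t ∈ [0,T]`. -/
theorem taylor_method_local_truncation_error
    (r : ℕ) (D : Set ℝ) (hD : IsOpen D)
    (f : ℝ → ℝ) (hf : ContDiffOn ℝ (r + 1) f D)
    (T : ℝ) (hT : 0 < T) (y : ℝ → ℝ)
    (hyD : ∀ t ∈ Icc (0 : ℝ) T, y t ∈ D)
    (hy : ∀ t ∈ Icc (0 : ℝ) T, HasDerivWithinAt y (f (y t)) (Icc (0 : ℝ) T) t)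
    (K : Set ℝ) (hK : IsCompact K) (hKD : K ⊆ D)
    (hyK : y '' Icc (0 : ℝ) T ⊆ interior K)
    (h₀ : ℝ) (hh₀ : 0 < h₀)
    (Φ : ℝ → ℝ → ℝ)
    (hΦ0 : ∀ z ∈ K, Φ 0 z = z)
    (hΦode : ∀ z ∈ K, ∀ h ∈ Icc (0 : ℝ) h₀,
      HasDerivWithinAt (fun s => Φ s z)
        (∑ j ∈ range (r + 1),
          iteratedDerivWithin j f D z / (Nat.factorial j) * (Φ h z - z) ^ j)
        (Icc (0 : ℝ) h₀) h)
    (hΦsmooth : ∀ z ∈ K, ContDiffOn ℝ (r + 2) (fun s => Φ s z) (Icc (0 : ℝ) h₀))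
    (hΦcont : ContinuousOn
      (fun p : ℝ × ℝ =>
        iteratedDerivWithin (r + 2) (fun s => Φ s p.2) (Icc (0 : ℝ) h₀) p.1)
      (Icc (0 : ℝ) h₀ ×ˢ K)) :
    ∃ C : ℝ, 0 ≤ C ∧ ∀ t ∈ Icc (0 : ℝ) T, ∀ h : ℝ, 0 ≤ h → h ≤ h₀ → t + h ≤ T →
      |y (t + h) - Φ h (y t)| ≤ C * h ^ (r + 2) := by
  have hys := aux_smooth r D f hf T hT y hyD hy
  have hU := uniqueDiffOn_Icc hT
  obtain ⟨M1, hM1⟩ := isCompact_Icc.exists_bound_of_continuousOn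
    (hys.continuousOn_iteratedDerivWithin (m := r + 2) (by norm_cast) hU)
  obtain ⟨M2, hM2⟩ := (isCompact_Icc.prod hK).exists_bound_of_continuousOn hΦcont
  have hyK' : ∀ t ∈ Icc (0 : ℝ) T, y t ∈ K := fun t ht =>
    interior_subset (hyK (mem_image_of_mem _ ht))
  have hM1' : 0 ≤ M1 := (norm_nonneg _).trans (hM1 0 (left_mem_Icc.2 hT.le))
  have hM2' : 0 ≤ M2 := (norm_nonneg _).trans
    (hM2 (0, y 0) ⟨left_mem_Icc.2 hh₀.le, hyK' 0 (left_mem_Icc.2 hT.le)⟩)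
  refine ⟨M1 + M2, by positivity, fun t ht h hh hhh₀ hth => ?_⟩
  have hz := hyK' t ht
  rcases hh.eq_or_lt with rfl | hpos
  · simp [hΦ0 _ hz]
  have htT : t < T := by linarith
  have hsub : Icc t T ⊆ Icc 0 T := Icc_subset_Icc_left ht.1
  obtain ⟨a, ha⟩ := aux_taylor (r + 1) y t T M1 htT.le
    (by exact_mod_cast hys.mono hsub) (by
      intro x hx
      have := hM1 x (hsub hx)
      rw [Real.norm_eq_abs] at this
      rwa [iteratedDerivWithin, iteratedFDerivWithin_subset hsub (uniqueDiffOn_Icc htT) hU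
        (by exact_mod_cast hys) hx])
  obtain ⟨b, hb⟩ := aux_taylor (r + 1) (fun s => Φ s (y t)) 0 h₀ M2 hh₀.le
    (by exact_mod_cast hΦsmooth _ hz) (fun x hx => hM2 (x, y t) ⟨hx, hz⟩)
  simp only [zero_add] at hb
  have hodeO : (fun s => y (t + s) - Φ s (y t)) =O[𝓝[>] (0 : ℝ)] fun s => s ^ (r + 2) := by
    have hs1 : Icc (0 : ℝ) h ⊆ Icc 0 h₀ := Icc_subset_Icc_right hhh₀
    refine aux_ode r (fun j => iteratedDerivWithin j f D (y t) / (Nat.factorial j)) (y t) h hpos f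
      (fun s => y (t + s)) (fun s => Φ s (y t)) ?_ ?_ (by simp) (hΦ0 _ hz)
      (aux_f r D hD f hf _ (hKD hz))
    · intro s hs
      have hmaps : MapsTo (fun s => t + s) (Icc 0 h) (Icc 0 T) := fun x hx =>
        ⟨by linarith [hx.1, ht.1], by linarith [hx.2]⟩
      have h1 := (hy (t + s) (hmaps hs)).comp s
        (((hasDerivAt_id s).const_add t).hasDerivWithinAt) hmaps
      simpa [Function.comp_def] using h1
    · intro s hs
      exact (hΦode _ hz s (hs1 hs)).mono hs1
  have hdiff : ∀ s, 0 ≤ s → s ≤ h →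
      |(y (t + s) - Φ s (y t)) - ∑ k ∈ range (r + 2), (a k - b k) * s ^ k|
        ≤ (M1 + M2) * s ^ (r + 2) := by
    intro s hs hsh
    have h1 := ha s hs (by linarith)
    have h2 := hb s hs (by linarith)
    simp only [sub_mul, Finset.sum_sub_distrib]
    rw [abs_le] at *
    constructor <;> linarith [h1.1, h1.2, h2.1, h2.2]
  have hzero := aux_poly (r + 2) (fun k => a k - b k) (by
    have h1 : (fun s => (y (t + s) - Φ s (y t)) - ∑ k ∈ range (r + 2), (a k - b k) * s ^ k)
        =O[𝓝[>] (0 : ℝ)] fun s => s ^ (r + 2) := by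
      refine IsBigO.of_bound (M1 + M2) ?_
      filter_upwards [Ioc_mem_nhdsGT hpos] with s hs
      have := hdiff s hs.1.le hs.2
      rwa [norm_pow, Real.norm_eq_abs, Real.norm_eq_abs, abs_of_pos hs.1]
    simpa using hodeO.sub h1)
  have h1 := hdiff h hh le_rfl
  rwa [Finset.sum_eq_zero (fun k hk => by simp [hzero k (Finset.mem_range.1 hk)]), sub_zero] at h1
end

section
/- Let r ∈ ℕ₀, let D ⊆ ℝ be open, let f : D → ℝ be (r+1)-times continuously differentiable, let T > 0, and let y : [0,T] → D solve y'(t) = f(y(t)) on [0,T]. Fix t ∈ [0,T] and h₀ > 0, and suppose Φ : [0,h₀] → ℝ is (r+2)-times differentiable with Φ(0) = y(t) and Φ'(h) = Σ_{j=0}^{r} (f^{(j)}(y(t))/j!)(Φ(h) − y(t))^j for all h ∈ [0,h₀]. Then for every n = 0, 1, …, r+1 one has (d/dh)^n [y(t+h)] at h = 0 equal to Φ^{(n)}(0); that is, the first r+1 derivatives (and the value) of the exact solution h ↦ y(t+h) and of the Taylor-approximated solution Φ agree at h = 0. -/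
open Finset Set

/-- Iterated Lie derivatives of the identity along the vector field `f`. -/
noncomputable def lieIter (f : ℝ → ℝ) : ℕ → ℝ → ℝ
  | 0 => fun x => x
  | n + 1 => deriv (lieIter f n) * f

theorem lieIter_contDiffOn {D : Set ℝ} (hD : IsOpen D) {f : ℝ → ℝ} {N : ℕ}
    (hf : ContDiffOn ℝ N f D) (n : ℕ) :
    ∀ m : ℕ, n + m ≤ N + 1 → ContDiffOn ℝ m (lieIter f n) D := by
  induction n with
  | zero => intro m _; exact contDiffOn_id
  | succ n ih =>
    intro m hm
    have h1 : ContDiffOn ℝ m (deriv (lieIter f n)) D :=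
      (ih (m + 1) (by omega)).deriv_of_isOpen hD (by norm_cast)
    exact h1.mul (hf.of_le (by exact_mod_cast (by omega : m ≤ N)))

theorem iteratedDerivWithin_solution {D : Set ℝ} (hD : IsOpen D) {f : ℝ → ℝ} {N : ℕ}
    (hf : ContDiffOn ℝ N f D) {s : Set ℝ} (hs : UniqueDiffOn ℝ s) {u : ℝ → ℝ}
    (huD : ∀ x ∈ s, u x ∈ D) (hu : ∀ x ∈ s, HasDerivWithinAt u (f (u x)) s x) (n : ℕ) :
    n ≤ N + 1 → ∀ x ∈ s, iteratedDerivWithin n u s x = lieIter f n (u x) := by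
  induction n with
  | zero => intro _ x _; simp [lieIter]
  | succ n ih =>
    intro hn x hx
    have ih' := ih (by omega)
    rw [iteratedDerivWithin_succ, derivWithin_congr (f := fun z => lieIter f n (u z)) ih' (ih' x hx)]
    have h1 : DifferentiableAt ℝ (lieIter f n) (u x) :=
      (((lieIter_contDiffOn hD hf n 1 (by omega)).contDiffAt
        (hD.mem_nhds (huD x hx))).differentiableAt (by simp))
    exact (h1.hasDerivAt.comp_hasDerivWithinAt x (hu x hx)).derivWithin (hs x hx)

theorem lieIter_agree {D E : Set ℝ} (hD : IsOpen D) (hE : IsOpen E) {f g : ℝ → ℝ} {r : ℕ}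
    (hf : ContDiffOn ℝ r f D) (hg : ContDiffOn ℝ r g E) {a : ℝ} (haD : a ∈ D) (haE : a ∈ E)
    (hfg : ∀ j ≤ r, iteratedDeriv j f a = iteratedDeriv j g a) (n : ℕ) :
    ∀ j : ℕ, n + j ≤ r + 1 →
      iteratedDeriv j (lieIter f n) a = iteratedDeriv j (lieIter g n) a := by
  induction n with
  | zero => intro j _; rfl
  | succ n ih =>
    intro j hj
    have key : ∀ {F : Set ℝ} {q : ℝ → ℝ}, IsOpen F → ContDiffOn ℝ r q F → a ∈ F →
        iteratedDeriv j (lieIter q (n + 1)) a = ∑ i ∈ range (j + 1),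
          j.choose i * iteratedDeriv (i + 1) (lieIter q n) a * iteratedDeriv (j - i) q a := by
      intro F q hF hq haF
      have h1 : ContDiffOn ℝ j (deriv (lieIter q n)) F :=
        (lieIter_contDiffOn hF hq n (j + 1) (by omega)).deriv_of_isOpen hF (by norm_cast)
      have h2 : ContDiffOn ℝ j q F := hq.of_le (by exact_mod_cast (by omega : j ≤ r))
      simp only [lieIter, iteratedDeriv_succ']
      exact iteratedDeriv_mul (h1.contDiffAt (hF.mem_nhds haF)) (h2.contDiffAt (hF.mem_nhds haF))
    rw [key hD hf haD, key hE hg haE]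
    refine Finset.sum_congr rfl fun i hi => ?_
    have hi' := Finset.mem_range.mp hi
    rw [ih (i + 1) (by omega), hfg (j - i) (by omega)]

theorem iteratedDeriv_taylorSum (c : ℕ → ℝ) (a : ℝ) (r j : ℕ) (hj : j ≤ r) :
    iteratedDeriv j (fun x => ∑ i ∈ range (r + 1), c i / (Nat.factorial i) * (x - a) ^ i) a
      = c j := by
  rw [iteratedDeriv_fun_sum (fun i _ => by fun_prop)]
  have h : ∀ i ∈ range (r + 1),
      iteratedDeriv j (fun x => c i / (Nat.factorial i) * (x - a) ^ i) a
        = if j = i then c j else 0 := by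
    intro i _
    rw [iteratedDeriv_const_mul_field, iteratedDeriv_comp_sub_const j (fun x : ℝ => x ^ i) a]
    simp only [sub_self]
    rw [iteratedDeriv_fun_pow_zero]
    split_ifs with hji
    · subst hji
      have := Nat.factorial_ne_zero j
      field_simp
    · simp
  rw [Finset.sum_congr rfl h]
  simp [Nat.lt_succ_of_le hj]

/-- The value and the first `r+1` derivatives at `h = 0` of the exact solution
`h ↦ y(t+h)` of `y' = f(y)` and of the solution `Φ` of the IVP obtained by replacing `f`
by its `r`-th order Taylor polynomial centered at `y(t)` agree (one-sided derivatives at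
the endpoints). -/
theorem taylor_method_derivatives_match
    (r : ℕ) (D : Set ℝ) (hD : IsOpen D)
    (f : ℝ → ℝ) (hf : ContDiffOn ℝ (r + 1) f D)
    (T : ℝ) (hT : 0 < T) (y : ℝ → ℝ)
    (hyD : ∀ t ∈ Icc (0 : ℝ) T, y t ∈ D)
    (hy : ∀ t ∈ Icc (0 : ℝ) T, HasDerivWithinAt y (f (y t)) (Icc (0 : ℝ) T) t)
    (t : ℝ) (ht : t ∈ Icc (0 : ℝ) T)
    (h₀ : ℝ) (hh₀ : 0 < h₀)
    (Φ : ℝ → ℝ)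
    (hΦdiff : ∀ k ≤ r + 1,
      DifferentiableOn ℝ (iteratedDerivWithin k Φ (Icc (0 : ℝ) h₀)) (Icc (0 : ℝ) h₀))
    (hΦ0 : Φ 0 = y t)
    (hΦ : ∀ h ∈ Icc (0 : ℝ) h₀,
      HasDerivWithinAt Φ
        (∑ j ∈ range (r + 1),
          iteratedDerivWithin j f D (y t) / (Nat.factorial j) * (Φ h - y t) ^ j)
        (Icc (0 : ℝ) h₀) h) :
    ∀ n ≤ r + 1,
      iteratedDerivWithin n (fun h => y (t + h)) (Icc (-t) (T - t)) 0 =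
        iteratedDerivWithin n Φ (Icc (0 : ℝ) h₀) 0 := by
  intro n hn
  have hfr : ContDiffOn ℝ r f D := hf.of_le (by exact_mod_cast Nat.le_succ r)
  have ha : y t ∈ D := hyD t ht
  set p : ℝ → ℝ := fun x => ∑ j ∈ range (r + 1),
    iteratedDerivWithin j f D (y t) / (Nat.factorial j) * (x - y t) ^ j with hp
  have hpc : ContDiffOn ℝ r p univ := by
    apply ContDiff.contDiffOn
    rw [hp]
    fun_prop
  have hmem : ∀ h ∈ Icc (-t) (T - t), t + h ∈ Icc (0 : ℝ) T := by
    intro h hh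
    exact ⟨by linarith [hh.1], by linarith [hh.2]⟩
  have h1 := iteratedDerivWithin_solution hD hfr (uniqueDiffOn_Icc (by linarith : -t < T - t))
    (u := fun h => y (t + h)) (fun h hh => hyD _ (hmem h hh))
    (fun h hh => by
      have h2 : HasDerivWithinAt (fun h : ℝ => t + h) 1 (Icc (-t) (T - t)) h :=
        ((hasDerivAt_id h).const_add t).hasDerivWithinAt
      have h3 := (hy _ (hmem h hh)).comp h h2 hmem
      simpa [Function.comp_def] using h3) n hn 0 ⟨by linarith [ht.1], by linarith [ht.2]⟩
  have h2 := iteratedDerivWithin_solution isOpen_univ hpc (uniqueDiffOn_Icc hh₀)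
    (u := Φ) (fun _ _ => mem_univ _) hΦ n hn 0 ⟨le_rfl, hh₀.le⟩
  rw [h1, h2, hΦ0]
  have h3 := lieIter_agree hD isOpen_univ hfr hpc ha (mem_univ _) (fun j hj => by
    rw [hp, iteratedDeriv_taylorSum (fun j => iteratedDerivWithin j f D (y t)) (y t) r j hj]
    exact (iteratedDerivWithin_of_isOpen hD ha).symm) n 0 (by omega)
  simpa using h3
end

section
/- Let r ∈ ℕ₀, let D ⊆ ℝ be open, let f : D → ℝ be (r+1)-times continuously differentiable, let T > 0, and let y : [0,T] → D solve y'(t) = f(y(t)) on [0,T] with y(0) = y₀. Let K ⊆ D be compact with y([0,T]) contained in the interior of K, let h₀ > 0, and let Φ : [0,h₀] × K → ℝ be continuous such that for every y ∈ K: Φ(0,y) = y and ∂Φ/∂h(h,y) = Σ_{j=0}^{r} (f^{(j)}(y)/j!)(Φ(h,y) − y)^j for all h ∈ [0,h₀]; suppose moreover that ∂^{r+2}Φ/∂h^{r+2} exists and is continuous on [0,h₀] × K and that ∂Φ/∂h satisfies a Lipschitz condition with respect to y on [0,h₀] × K. Then Φ is a convergent one-step method of order r+1: there exist N₀ ∈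 ℕ and M ≥ 0 such that for every N ≥ N₀, setting h = T/N, the recursion y₀⁽ᴺ⁾ = y₀, y_{n+1}⁽ᴺ⁾ = Φ(h, y_n⁽ᴺ⁾) is well defined with all y_n⁽ᴺ⁾ in the interior of K, and max_{0 ≤ n ≤ N} |y(nh) − y_n⁽ᴺ⁾| ≤ M h^{r+1}. -/
open Finset Set

/-- Uniform Taylor remainder bound on a compact convex subset of an open set. -/
lemma taylor_aux (D : Set ℝ) (hD : IsOpen D) (S : Set ℝ) (hS : IsCompact S)
    (hSc : Convex ℝ S) (hSD : S ⊆ D) (n : ℕ) :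
    ∀ f : ℝ → ℝ, ContDiffOn ℝ n f D → ∃ C : ℝ, 0 ≤ C ∧ ∀ z ∈ S, ∀ w ∈ S,
      |f w - ∑ j ∈ range n, iteratedDerivWithin j f D z / (Nat.factorial j) * (w - z) ^ j|
        ≤ C * |w - z| ^ n := by
  induction n with
  | zero =>
    intro f hf
    obtain ⟨C, hC⟩ := hS.exists_bound_of_continuousOn (hf.continuousOn.mono hSD)
    refine ⟨max C 0, le_max_right _ _, fun z _ w hw => ?_⟩
    simpa using Or.inl (hC w hw)
  | succ n ih =>
    intro f hf
    have hf1 : ContDiffOn ℝ ((n : WithTop ℕ∞) + 1) f D := by exact_mod_cast hf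
    rw [contDiffOn_succ_iff_derivWithin hD.uniqueDiffOn] at hf1
    obtain ⟨hd, -, hf'⟩ := hf1
    obtain ⟨C, hC0, hC⟩ := ih _ hf'
    refine ⟨C, hC0, fun z hz w hw => ?_⟩
    set g : ℝ → ℝ := fun x => f x -
      ∑ j ∈ range (n + 1), iteratedDerivWithin j f D z / (Nat.factorial j) * (x - z) ^ j with hg
    set g' : ℝ → ℝ := fun x => derivWithin f D x -
      ∑ j ∈ range n, iteratedDerivWithin j (derivWithin f D) D z / (Nat.factorial j)
        * (x - z) ^ j with hg'
    have hsub : uIcc z w ⊆ S := by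
      rw [← segment_eq_uIcc]; exact hSc.segment_subset hz hw
    have hder : ∀ x ∈ uIcc z w, HasDerivWithinAt g (g' x) (uIcc z w) x := by
      intro x hx
      have hxD := hSD (hsub hx)
      have h1 : HasDerivAt f (derivWithin f D x) x :=
        ((hd x hxD).hasDerivWithinAt).hasDerivAt (hD.mem_nhds hxD)
      have h2 : HasDerivAt (fun x => ∑ j ∈ range (n + 1),
          iteratedDerivWithin j f D z / (Nat.factorial j) * (x - z) ^ j)
          (∑ j ∈ range (n + 1), iteratedDerivWithin j f D z / (Nat.factorial j) *
            (j * (x - z) ^ (j - 1) * 1)) x := by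
        apply HasDerivAt.fun_sum
        intro j _
        exact (((hasDerivAt_id x).sub_const z).pow j).const_mul _
      have h3 := h1.sub h2
      refine HasDerivAt.hasDerivWithinAt ?_
      have h4 : HasDerivAt g _ x := h3
      refine h4.congr_deriv (Eq.symm ?_)
      change derivWithin f D x - _ = _
      rw [Finset.sum_range_succ']
      simp only [iteratedDerivWithin_succ', Nat.factorial_succ]
      simp only [Nat.cast_zero, zero_mul, mul_zero, add_zero]
      congr 1
      refine Finset.sum_congr rfl fun j _ => ?_
      have : (Nat.factorial j : ℝ) ≠ 0 := by positivity
      have : (j : ℝ) + 1 ≠ 0 := by positivity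
      push_cast
      try simp only [Nat.add_sub_cancel]
      field_simp
    have hb : ∀ x ∈ uIcc z w, ‖g' x‖ ≤ C * |w - z| ^ n := by
      intro x hx
      refine (hC z hz x (hsub hx)).trans ?_
      have : |x - z| ≤ |w - z| := abs_sub_left_of_mem_uIcc hx
      gcongr
    have hm := (convex_uIcc z w).norm_image_sub_le_of_norm_hasDerivWithin_le hder hb
      left_mem_uIcc right_mem_uIcc
    have hgz : g z = 0 := by
      simp [hg, Finset.sum_range_succ']
    rw [hgz, sub_zero] at hm
    rw [pow_succ, ← mul_assoc]
    exact hm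

/-- Uniform Lipschitz bound for polynomials with bounded coefficients. -/
lemma poly_lip (n : ℕ) (B : ℕ → ℝ) (R : ℝ) :
    ∃ Λ : ℝ, 0 < Λ ∧ ∀ a : ℕ → ℝ, (∀ j ∈ range n, |a j| ≤ B j) → ∀ x x' : ℝ,
      |x| ≤ R → |x'| ≤ R →
      |∑ j ∈ range n, a j * x ^ j - ∑ j ∈ range n, a j * x' ^ j| ≤ Λ * |x - x'| := by
  refine ⟨1 + ∑ j ∈ range n, |B j| * (j * |R| ^ (j - 1)), by positivity, ?_⟩
  intro a ha x x' hx hx'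
  rw [← Finset.sum_sub_distrib, add_mul, Finset.sum_mul]
  refine (Finset.abs_sum_le_sum_abs _ _).trans ?_
  refine le_trans (Finset.sum_le_sum fun j hj => ?_) (le_add_of_nonneg_left (by positivity))
  rw [← mul_sub, abs_mul]
  have h1 := abs_pow_sub_pow_le x x' j
  have h2 : max |x| |x'| ≤ |R| := max_le (hx.trans (le_abs_self R)) (hx'.trans (le_abs_self R))
  have h3 : |x ^ j - x' ^ j| ≤ |x - x'| * j * |R| ^ (j - 1) := h1.trans (by gcongr)
  calc |a j| * |x ^ j - x' ^ j| ≤ |B j| * (|x - x'| * j * |R| ^ (j - 1)) := by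
        exact mul_le_mul ((ha j hj).trans (le_abs_self _)) h3 (abs_nonneg _) (abs_nonneg _)
    _ = _ := by ring

lemma gronwall_aux (Λ ε h : ℝ) (hΛ : 0 < Λ) (hε : 0 ≤ ε) :
    gronwallBound 0 Λ ε h ≤ ε * h * Real.exp (Λ * h) := by
  rw [gronwallBound_of_K_ne_0 hΛ.ne']
  have h1 : Real.exp (Λ * h) - 1 ≤ Λ * h * Real.exp (Λ * h) := by
    have := Real.add_one_le_exp (-(Λ * h))
    have h2 := mul_le_mul_of_nonneg_right this (Real.exp_pos (Λ * h)).le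
    rw [← Real.exp_add, neg_add_cancel, Real.exp_zero] at h2
    linarith
  have h3 : ε / Λ * (Real.exp (Λ * h) - 1) ≤ ε / Λ * (Λ * h * Real.exp (Λ * h)) := by gcongr
  have h4 : ε / Λ * (Λ * h * Real.exp (Λ * h)) = ε * h * Real.exp (Λ * h) := by field_simp
  simp only [zero_mul, zero_add]
  linarith

/-- The one-step method obtained by adaptively replacing `f` in `y' = f(y)` by its `r`-th
order Taylor polynomial centered at the current value and solving the resulting equation
exactly is a convergent method of order `r+1`. -/
theorem taylor_method_convergent_order
    (r : ℕ) (D : Set ℝ) (hD : IsOpen D)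
    (f : ℝ → ℝ) (hf : ContDiffOn ℝ (r + 1) f D)
    (T : ℝ) (hT : 0 < T)
    (y : ℝ → ℝ) (y₀ : ℝ)
    (hyD : ∀ t ∈ Icc (0 : ℝ) T, y t ∈ D)
    (hy : ∀ t ∈ Icc (0 : ℝ) T, HasDerivWithinAt y (f (y t)) (Icc (0 : ℝ) T) t)
    (hy0 : y 0 = y₀)
    (K : Set ℝ) (hK : IsCompact K) (hKD : K ⊆ D)
    (hyK : y '' Icc (0 : ℝ) T ⊆ interior K)
    (h₀ : ℝ) (hh₀ : 0 < h₀)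
    (Φ : ℝ → ℝ → ℝ)
    (hΦcont : ContinuousOn (fun q : ℝ × ℝ => Φ q.1 q.2) (Icc (0 : ℝ) h₀ ×ˢ K))
    (hΦ0 : ∀ z ∈ K, Φ 0 z = z)
    (hΦode : ∀ z ∈ K, ∀ h ∈ Icc (0 : ℝ) h₀,
      HasDerivWithinAt (fun s => Φ s z)
        (∑ j ∈ range (r + 1),
          iteratedDerivWithin j f D z / (Nat.factorial j) * (Φ h z - z) ^ j)
        (Icc (0 : ℝ) h₀) h)
    (hΦsmooth : ∀ z ∈ K, ContDiffOn ℝ (r + 2) (fun s => Φ s z) (Icc (0 : ℝ) h₀))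
    (hΦcont2 : ContinuousOn
      (fun p : ℝ × ℝ =>
        iteratedDerivWithin (r + 2) (fun s => Φ s p.2) (Icc (0 : ℝ) h₀) p.1)
      (Icc (0 : ℝ) h₀ ×ˢ K))
    -- Lipschitz condition for ∂Φ/∂h with respect to the base point
    (L : ℝ) (hL : 0 < L)
    (hLip : ∀ h ∈ Icc (0 : ℝ) h₀, ∀ z ∈ K, ∀ z' ∈ K,
      |(∑ j ∈ range (r + 1),
          iteratedDerivWithin j f D z / (Nat.factorial j) * (Φ h z - z) ^ j) -
        (∑ j ∈ range (r + 1),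
          iteratedDerivWithin j f D z' / (Nat.factorial j) * (Φ h z' - z') ^ j)| ≤
        L * |z - z'|) :
    ∃ N₀ : ℕ, 0 < N₀ ∧ ∃ M : ℝ, 0 ≤ M ∧ ∀ N : ℕ, N₀ ≤ N →
      ∀ seq : ℕ → ℝ, seq 0 = y₀ → (∀ n < N, seq (n + 1) = Φ (T / N) (seq n)) →
        ∀ n ≤ N, seq n ∈ interior K ∧
          |y (n * (T / N)) - seq n| ≤ M * (T / N) ^ (r + 1) := by
  -- the image of the solution
  have hycont : ContinuousOn y (Icc 0 T) := fun t ht => (hy t ht).continuousWithinAt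
  set S := y '' Icc (0 : ℝ) T with hSdef
  have hScomp : IsCompact S := isCompact_Icc.image_of_continuousOn hycont
  have hSconv : Convex ℝ S :=
    ((isPreconnected_Icc.image y hycont).ordConnected).convex
  have hSK : S ⊆ K := hyK.trans interior_subset
  have hyS : ∀ t ∈ Icc (0 : ℝ) T, y t ∈ S := fun t ht => mem_image_of_mem y ht
  obtain ⟨C, hC0, hC⟩ := taylor_aux D hD S hScomp hSconv (hSK.trans hKD) (r + 1) f
    (by exact_mod_cast hf)
  obtain ⟨B0, hB0⟩ := hScomp.exists_bound_of_continuousOn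
    (hf.continuousOn.mono (hSK.trans hKD))
  have hB0n : 0 ≤ B0 := (norm_nonneg _).trans (hB0 _ (hyS 0 ⟨le_rfl, hT.le⟩))
  have hcoef : ∀ j : ℕ, ∃ B : ℝ, j ∈ range (r + 1) → ∀ z ∈ K,
      |iteratedDerivWithin j f D z / (Nat.factorial j)| ≤ B := by
    intro j
    by_cases hj : j ∈ range (r + 1)
    · have hle : ((j : ℕ) : WithTop ℕ∞) ≤ (r : WithTop ℕ∞) + 1 := by
        have := (Finset.mem_range.1 hj).le
        exact_mod_cast this
      obtain ⟨B, hB⟩ := hK.exists_bound_of_continuousOn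
        (((hf.continuousOn_iteratedDerivWithin hle hD.uniqueDiffOn).mono hKD).div_const
          (Nat.factorial j : ℝ))
      exact ⟨B, fun _ z hz => hB z hz⟩
    · exact ⟨0, fun h => absurd h hj⟩
  choose B hB using hcoef
  obtain ⟨R1, hR1⟩ := (isCompact_Icc.prod hK).exists_bound_of_continuousOn hΦcont
  obtain ⟨R2, hR2⟩ := hK.exists_bound_of_continuousOn continuousOn_id
  obtain ⟨Λ, hΛ, hlip⟩ := poly_lip (r + 1) B (max R1 R2 + R2)
  -- local error
  have hloc : ∀ h t : ℝ, 0 ≤ h → h ≤ h₀ → 0 ≤ t → t + h ≤ T →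
      |y (t + h) - Φ h (y t)| ≤ C * B0 ^ (r + 1) * Real.exp (Λ * h₀) * h ^ (r + 2) := by
    intro h t hh hhh ht hth
    have hmem : ∀ s ∈ Icc (0 : ℝ) h, t + s ∈ Icc (0 : ℝ) T := fun s hs =>
      ⟨by linarith [hs.1], by linarith [hs.2]⟩
    have htm : t ∈ Icc (0 : ℝ) T := ⟨ht, by linarith⟩
    have hzS : y t ∈ S := hyS t htm
    have hzK : y t ∈ K := hSK hzS
    have hsub : Icc (0 : ℝ) h ⊆ Icc 0 h₀ := Icc_subset_Icc_right hhh
    have hvder : ∀ s ∈ Icc (0 : ℝ) h,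
        HasDerivWithinAt (fun s => y (t + s)) (f (y (t + s))) (Icc 0 h) s := by
      intro s hs
      have h1 : HasDerivWithinAt (fun s : ℝ => t + s) 1 (Icc 0 h) s :=
        ((hasDerivAt_id s).const_add t).hasDerivWithinAt
      have := (hy (t + s) (hmem s hs)).comp s h1 hmem
      rw [mul_one] at this
      exact this
    have huder : ∀ s ∈ Icc (0 : ℝ) h, HasDerivWithinAt (fun s => Φ s (y t))
        (∑ j ∈ range (r + 1),
          iteratedDerivWithin j f D (y t) / (Nat.factorial j) * (Φ s (y t) - y t) ^ j)
        (Icc (0 : ℝ) h) s := fun s hs => (hΦode _ hzK s (hsub hs)).mono hsub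
    have hvz : ∀ s ∈ Icc (0 : ℝ) h, |y (t + s) - y t| ≤ B0 * h := by
      intro s hs
      have := (convex_Icc (0 : ℝ) h).norm_image_sub_le_of_norm_hasDerivWithin_le hvder
        (fun s hs => hB0 _ (hyS _ (hmem s hs))) ⟨le_rfl, hh⟩ hs
      simp only [Real.norm_eq_abs, add_zero, sub_zero] at this
      refine this.trans ?_
      rw [abs_of_nonneg hs.1]
      exact mul_le_mul_of_nonneg_left hs.2 hB0n
    have hR2' : ∀ z ∈ K, |z| ≤ R2 := hR2
    have hlipset : LipschitzOnWith ⟨Λ, hΛ.le⟩ (fun w => ∑ j ∈ range (r + 1),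
          iteratedDerivWithin j f D (y t) / (Nat.factorial j) * (w - y t) ^ j)
          {w | |w| ≤ max R1 R2} := by
      refine LipschitzOnWith.of_dist_le_mul fun w hw w' hw' => ?_
      have hz := hR2' _ hzK
      have e1 : |w - y t| ≤ max R1 R2 + R2 := (abs_sub _ _).trans (add_le_add hw hz)
      have e2 : |w' - y t| ≤ max R1 R2 + R2 := (abs_sub _ _).trans (add_le_add hw' hz)
      have := hlip (fun j => iteratedDerivWithin j f D (y t) / (Nat.factorial j))
        (fun j hj => hB j hj _ hzK) _ _ e1 e2
      rw [Real.dist_eq, Real.dist_eq]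
      rw [sub_sub_sub_cancel_right] at this
      exact this
    have hIci : ∀ s ∈ Ico (0 : ℝ) h, Icc 0 h ∈ nhdsWithin s (Ici s) := fun s hs =>
      Icc_mem_nhdsGE_of_mem hs
    have hG := dist_le_of_approx_trajectories_ODE_of_mem (a := 0) (b := h)
      (K := ⟨Λ, hΛ.le⟩) (δ := 0) (εf := C * (B0 * h) ^ (r + 1)) (εg := 0)
      (v := fun _ w => ∑ j ∈ range (r + 1),
          iteratedDerivWithin j f D (y t) / (Nat.factorial j) * (w - y t) ^ j)
      (s := fun _ => {w | |w| ≤ max R1 R2})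
      (f := fun s => y (t + s)) (g := fun s => Φ s (y t))
      (f' := fun s => f (y (t + s)))
      (g' := fun s => ∑ j ∈ range (r + 1),
          iteratedDerivWithin j f D (y t) / (Nat.factorial j) * (Φ s (y t) - y t) ^ j)
      (fun _ _ => hlipset)
      (fun s hs => (hvder s hs).continuousWithinAt)
      (fun s hs => (hvder s (Ico_subset_Icc_self hs)).mono_of_mem_nhdsWithin (hIci s hs))
      (fun s hs => by
        have hs' := Ico_subset_Icc_self hs
        rw [Real.dist_eq]
        refine (hC _ hzS _ (hyS _ (hmem s hs'))).trans ?_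
        have := hvz s hs'
        gcongr)
      (fun s hs => (hR2' _ (hSK (hyS _ (hmem s (Ico_subset_Icc_self hs))))).trans
        (le_max_right _ _))
      (fun s hs => (huder s hs).continuousWithinAt)
      (fun s hs => (huder s (Ico_subset_Icc_self hs)).mono_of_mem_nhdsWithin (hIci s hs))
      (fun s hs => by simp)
      (fun s hs => (hR1 (s, y t) ⟨hsub (Ico_subset_Icc_self hs), hzK⟩).trans (le_max_left _ _))
      (by simp [hΦ0 _ hzK]) h ⟨hh, le_rfl⟩
    rw [Real.dist_eq, add_zero, sub_zero] at hG
    refine hG.trans ((gronwall_aux Λ _ h hΛ (by positivity)).trans ?_)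
    have : Real.exp (Λ * h) ≤ Real.exp (Λ * h₀) := by gcongr
    calc C * (B0 * h) ^ (r + 1) * h * Real.exp (Λ * h)
        ≤ C * (B0 * h) ^ (r + 1) * h * Real.exp (Λ * h₀) := by gcongr
      _ = _ := by ring
  -- stability
  have hstab : ∀ h ∈ Icc (0 : ℝ) h₀, ∀ z ∈ K, ∀ z' ∈ K,
      |Φ h z - Φ h z'| ≤ (1 + h * L) * |z - z'| := by
    intro h hh z hz z' hz'
    have := (convex_Icc (0 : ℝ) h₀).norm_image_sub_le_of_norm_hasDerivWithin_le
      (fun s hs => (hΦode z hz s hs).sub (hΦode z' hz' s hs))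
      (fun s hs => hLip s hs z hz z' hz') ⟨le_rfl, hh₀.le⟩ hh
    simp only [Pi.sub_apply, Real.norm_eq_abs, hΦ0 z hz, hΦ0 z' hz', sub_zero,
      abs_of_nonneg hh.1] at this
    have h2 := abs_sub_abs_le_abs_sub (Φ h z - Φ h z') (z - z')
    nlinarith
  obtain ⟨δ, hδ, hthick⟩ := hScomp.exists_thickening_subset_open isOpen_interior hyK
  set A := C * B0 ^ (r + 1) * Real.exp (Λ * h₀) with hA
  have hA0 : 0 ≤ A := by positivity
  set M := A * T * Real.exp (L * T) with hM
  have hM0 : 0 ≤ M := by positivity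
  have hlim : Filter.Tendsto (fun N : ℕ => T / (N : ℝ)) Filter.atTop (nhds 0) :=
    tendsto_const_div_atTop_nhds_zero_nat T
  have hlim2 : Filter.Tendsto (fun N : ℕ => M * (T / (N : ℝ)) ^ (r + 1)) Filter.atTop (nhds 0) := by
    simpa using (hlim.pow (r + 1)).const_mul M
  obtain ⟨N₁, hN₁⟩ := Filter.eventually_atTop.1
    ((hlim.eventually (gt_mem_nhds hh₀)).and (hlim2.eventually (gt_mem_nhds hδ)))
  refine ⟨N₁ + 1, Nat.succ_pos _, M, hM0, ?_⟩
  intro N hN seq hs0 hs n hn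
  obtain ⟨hNh, hNδ⟩ := hN₁ N (by omega)
  have hNpos : (0 : ℝ) < N := by exact_mod_cast (by omega : 0 < N)
  set h := T / (N : ℝ) with hh
  have hhpos : 0 < h := by positivity
  have hNhT : N * h = T := by rw [hh]; field_simp
  have htime : ∀ m : ℕ, m ≤ N → (m : ℝ) * h ∈ Icc (0 : ℝ) T := by
    intro m hm
    refine ⟨by positivity, ?_⟩
    rw [← hNhT]
    have : (m : ℝ) ≤ N := by exact_mod_cast hm
    gcongr
  have hgrow : ∀ m : ℕ, m ≤ N → (1 + h * L) ^ m * m * (A * h ^ (r + 2)) ≤ M * h ^ (r + 1) := by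
    intro m hm
    have h1 : (1 + h * L) ^ m ≤ Real.exp (L * T) := by
      calc (1 + h * L) ^ m ≤ Real.exp (h * L) ^ m := by
            gcongr
            linarith [Real.add_one_le_exp (h * L)]
        _ = Real.exp (m * (h * L)) := (Real.exp_nat_mul _ _).symm
        _ ≤ Real.exp (L * T) := by
            have := (htime m hm).2
            exact Real.exp_le_exp.2 (by nlinarith)
    have h2 := (htime m hm).2
    calc (1 + h * L) ^ m * m * (A * h ^ (r + 2))
        = (1 + h * L) ^ m * ((m * h) * (A * h ^ (r + 1))) := by ring
      _ ≤ Real.exp (L * T) * (T * (A * h ^ (r + 1))) := by gcongr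
      _ = M * h ^ (r + 1) := by rw [hM]; ring
  have hint : ∀ m : ℕ, m ≤ N → |y (m * h) - seq m| ≤ M * h ^ (r + 1) → seq m ∈ interior K := by
    intro m hm he
    apply hthick
    rw [Metric.mem_thickening_iff]
    refine ⟨y (m * h), hyS _ (htime m hm), ?_⟩
    rw [dist_comm, Real.dist_eq]
    exact he.trans_lt hNδ
  have key : ∀ m : ℕ, m ≤ N →
      |y (m * h) - seq m| ≤ (1 + h * L) ^ m * m * (A * h ^ (r + 2)) := by
    intro m
    induction m with
    | zero => intro _; simp [hs0, hy0]
    | succ m ih =>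
      intro hm
      have hm' : m ≤ N := by omega
      have ih' := ih hm'
      have hsK : seq m ∈ K := interior_subset (hint m hm' (ih'.trans (hgrow m hm')))
      have hyKm : y (m * h) ∈ K := hSK (hyS _ (htime m hm'))
      have e1 := hstab h ⟨hhpos.le, hNh.le⟩ _ hyKm _ hsK
      have hcast : ((m + 1 : ℕ) : ℝ) * h = m * h + h := by push_cast; ring
      have e2 := hloc h (m * h) hhpos.le hNh.le (htime m hm').1
        (by rw [← hcast]; exact (htime _ hm).2)
      rw [hcast, hs m (by omega)]
      have e3 := abs_sub_le (y (m * h + h)) (Φ h (y (m * h))) (Φ h (seq m))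
      have hpos : 0 < 1 + h * L := by positivity
      have e4 := mul_le_mul_of_nonneg_left ih' hpos.le
      have e5 : 1 ≤ (1 + h * L) ^ (m + 1) := one_le_pow₀ (by nlinarith)
      have e6 : 0 ≤ A * h ^ (r + 2) := by positivity
      have e7 := mul_le_mul_of_nonneg_right e5 e6
      calc _ ≤ _ := e3
        _ ≤ A * h ^ (r + 2) + (1 + h * L) * ((1 + h * L) ^ m * m * (A * h ^ (r + 2))) :=
            add_le_add e2 (e1.trans e4)
        _ ≤ (1 + h * L) ^ (m + 1) * (A * h ^ (r + 2))
            + (1 + h * L) * ((1 + h * L) ^ m * m * (A * h ^ (r + 2))) := by linarith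
        _ = _ := by push_cast; ring
  have hfin := (key n hn).trans (hgrow n hn)
  exact ⟨hint n hn hfin, hfin⟩
end

section
/- Define φ₁ : ℝ → ℝ by φ₁(z) = (e^z − 1)/z for z ≠ 0 and φ₁(0) = 1. Let f : ℝ → ℝ be differentiable at a point y ∈ ℝ, and define Φ(h) = y + h·φ₁(f'(y)·h)·f(y) for h ∈ ℝ. Then Φ(0) = y and Φ is differentiable with Φ'(h) = f(y) + f'(y)·(Φ(h) − y) for all h ∈ ℝ; that is, the Rosenbrock–Euler method is given by exactly solving the linearization of y' = f(y) at y. -/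
noncomputable def phi1 (z : ℝ) : ℝ := if z = 0 then 1 else (Real.exp z - 1) / z

/-- The Rosenbrock–Euler method is given by exactly solving the linearization
of `y' = f(y)` at `y`. -/
theorem rosenbrock_euler_solves_linearization
    (f : ℝ → ℝ) (y : ℝ) (hf : DifferentiableAt ℝ f y)
    (Φ : ℝ → ℝ) (hΦ : Φ = fun h => y + h * phi1 (deriv f y * h) * f y) :
    Φ 0 = y ∧ ∀ h : ℝ, HasDerivAt Φ (f y + deriv f y * (Φ h - y)) h := by
  subst hΦ
  refine ⟨by simp, fun h => ?_⟩
  generalize deriv f y = a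
  by_cases ha : a = 0
  · subst ha
    have h1 : HasDerivAt (fun h : ℝ => y + h * f y) (1 * f y) h :=
      ((hasDerivAt_id h).mul_const (f y)).const_add y
    simpa [phi1] using h1
  · have key : ∀ t : ℝ, t * phi1 (a * t) = (Real.exp (a * t) - 1) / a := by
      intro t
      by_cases ht : t = 0
      · simp [ht]
      · have hat : a * t ≠ 0 := mul_ne_zero ha ht
        rw [phi1, if_neg hat]
        field_simp
    simp only [key]
    have h0 : HasDerivAt (fun t : ℝ => a * t) (a * 1) h := (hasDerivAt_id h).const_mul a
    have h1 := ((((h0.exp).sub_const 1).div_const a).mul_const (f y)).const_add y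
    refine h1.congr_deriv ?_
    field_simp
    ring
end

section
/- Let a, b, c ∈ ℝ with Δ := b² − 4ac > 0, and define D(t) = √Δ · cosh(√Δ·t/2) − b · sinh(√Δ·t/2) and w(t) = 2c · sinh(√Δ·t/2) / D(t). Then w(0) = 0, and at every t ∈ ℝ with D(t) ≠ 0 the function w is differentiable and satisfies w'(t) = a·w(t)² + b·w(t) + c. In other words, w is the solution of the autonomous Riccati initial value problem ẇ = aw² + bw + c, w(0) = 0, in the case of positive discriminant. -/
/-- The explicit formula solves the autonomous Riccati IVP `ẇ = aw² + bw + c`, `w(0) = 0`,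
in the case of positive discriminant `Δ = b² − 4ac > 0`. -/
theorem riccati_solution_positive_discriminant
    (a b c : ℝ) (hΔ : 0 < b ^ 2 - 4 * a * c)
    (D w : ℝ → ℝ)
    (hD : D = fun t => Real.sqrt (b ^ 2 - 4 * a * c) *
        Real.cosh (Real.sqrt (b ^ 2 - 4 * a * c) * t / 2) -
        b * Real.sinh (Real.sqrt (b ^ 2 - 4 * a * c) * t / 2))
    (hw : w = fun t => 2 * c * Real.sinh (Real.sqrt (b ^ 2 - 4 * a * c) * t / 2) / D t) :
    w 0 = 0 ∧ ∀ t : ℝ, D t ≠ 0 → HasDerivAt w (a * w t ^ 2 + b * w t + c) t := by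
  have hs : Real.sqrt (b ^ 2 - 4 * a * c) ^ 2 = b ^ 2 - 4 * a * c := Real.sq_sqrt hΔ.le
  generalize Real.sqrt (b ^ 2 - 4 * a * c) = s at *
  refine ⟨by simp [hw], fun t ht => ?_⟩
  have hl : HasDerivAt (fun t : ℝ => s * t / 2) (s / 2) t := by
    simpa using ((hasDerivAt_id t).const_mul s).div_const 2
  have hS := hl.sinh
  have hC := hl.cosh
  have hDt : D t = s * Real.cosh (s * t / 2) - b * Real.sinh (s * t / 2) := by rw [hD]
  have hD' : HasDerivAt D (s * (Real.sinh (s * t / 2) * (s / 2))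
      - b * (Real.cosh (s * t / 2) * (s / 2))) t := by
    rw [hD]
    exact (hC.const_mul s).sub (hS.const_mul b)
  have hwt : w t = 2 * c * Real.sinh (s * t / 2) / D t := by rw [hw]
  have h := (hS.const_mul (2 * c)).div hD' ht
  rw [hwt, hw]
  refine h.congr_deriv ?_
  generalize Real.sinh (s * t / 2) = S at *
  generalize Real.cosh (s * t / 2) = C at *
  generalize D t = d at *
  field_simp
  subst hDt
  linear_combination (-c * S ^ 2) * hs
end

section
/- Let b, Δ ∈ ℝ with Δ > 0 and √Δ < b, and define D(t) = √Δ · cosh(√Δ·t/2) − b · sinh(√Δ·t/2) and t_max = (1/√Δ) · ln((b + √Δ)/(b − √Δ)). Then D(t) > 0 for all 0 ≤ t < t_max and D(t_max) = 0. Consequently the maximal solution of the Riccati initial value problem ẇ = aw² + bw + c, w(0) = 0, with b² − 4ac = Δ exists precisely up to time t_max in this case. -/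
/-- If `Δ > 0` and `√Δ < b`, the denominator `D(t) = √Δ cosh(√Δ t/2) − b sinh(√Δ t/2)` is
positive for `0 ≤ t < t_max` and vanishes at `t_max = (1/√Δ) ln((b+√Δ)/(b−√Δ))`:
the maximal Riccati solution exists precisely up to time `t_max`. -/
theorem riccati_blowup_time_positive_discriminant
    (b Δ : ℝ) (hΔ : 0 < Δ) (hb : Real.sqrt Δ < b)
    (D : ℝ → ℝ)
    (hD : D = fun t => Real.sqrt Δ * Real.cosh (Real.sqrt Δ * t / 2) -
        b * Real.sinh (Real.sqrt Δ * t / 2))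
    (tmax : ℝ)
    (htmax : tmax = (1 / Real.sqrt Δ) * Real.log ((b + Real.sqrt Δ) / (b - Real.sqrt Δ))) :
    (∀ t : ℝ, 0 ≤ t → t < tmax → 0 < D t) ∧ D tmax = 0 := by
  have hs : 0 < Real.sqrt Δ := Real.sqrt_pos.mpr hΔ
  generalize Real.sqrt Δ = s at *
  have hbs : 0 < b - s := by linarith
  have hbs' : 0 < b + s := by linarith
  -- factorisation of the denominator
  have key : ∀ t, D t = Real.exp (-(s * t / 2)) / 2 * ((b + s) - (b - s) * Real.exp (s * t)) := by
    intro t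
    have h1 : Real.exp (s * t) = Real.exp (s * t / 2) * Real.exp (s * t / 2) := by
      rw [← Real.exp_add]; congr 1; ring
    have h2 : Real.exp (-(s * t / 2)) * Real.exp (s * t / 2) = 1 := by
      rw [← Real.exp_add]; simp
    simp only [hD]
    rw [Real.cosh_eq, Real.sinh_eq, h1]
    linear_combination ((b - s) / 2 * Real.exp (s * t / 2)) * h2
  have hst : s * tmax = Real.log ((b + s) / (b - s)) := by
    rw [htmax]; field_simp
  have hexp : (b - s) * Real.exp (s * tmax) = b + s := by
    rw [hst, Real.exp_log (div_pos hbs' hbs)]; field_simp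
  refine ⟨fun t _ ht => ?_, ?_⟩
  · rw [key]
    have h3 : Real.exp (s * t) < Real.exp (s * tmax) :=
      Real.exp_lt_exp.mpr (mul_lt_mul_of_pos_left ht hs)
    have h4 := mul_lt_mul_of_pos_left h3 hbs
    exact mul_pos (by positivity) (by linarith)
  · rw [key, hexp]; ring
end

section
/- Let b, Δ ∈ ℝ with (b, Δ) ≠ (0, 0), and define t_max ∈ (0, ∞] by: t_max = 2/b if Δ = 0 and b > 0; t_max = (1/√Δ)·ln((b+√Δ)/(b−√Δ)) if Δ > 0 and √Δ < b; t_max = (2/√(−Δ))·arccot(b/√(−Δ)) if Δ < 0 (with arccot : ℝ → (0,π)); and t_max = ∞ otherwise. Then t_max ≥ 2/√(b² + |Δ|). In particular, the maximal solution of the Riccati initial value problem ẇ = aw² + bw + c, w(0) = 0, with Δ = b² − 4ac, is guaranteed to exist on the interval [0, 2/√(b² + |Δ|)). -/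
open Classical

/-- The real inverse cotangent with values in `(0, π)`. -/
noncomputable def arccot (x : ℝ) : ℝ := Real.pi / 2 - Real.arctan x

/-- A priori lower bound on the blow-up time of the Riccati IVP `ẇ = aw² + bw + c`,
`w(0) = 0`, with `Δ = b² − 4ac`: in all cases `t_max ≥ 2/√(b² + |Δ|)`. -/
theorem riccati_blowup_time_apriori_bound
    (b Δ : ℝ) (hbΔ : (b, Δ) ≠ (0, 0))
    (tmax : EReal)
    (htmax : tmax =
      if Δ = 0 ∧ 0 < b then ((2 / b : ℝ) : EReal)
      else if 0 < Δ ∧ Real.sqrt Δ < b then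
        (((1 / Real.sqrt Δ) * Real.log ((b + Real.sqrt Δ) / (b - Real.sqrt Δ)) : ℝ) : EReal)
      else if Δ < 0 then (((2 / Real.sqrt (-Δ)) * arccot (b / Real.sqrt (-Δ)) : ℝ) : EReal)
      else (⊤ : EReal)) :
    ((2 / Real.sqrt (b ^ 2 + |Δ|) : ℝ) : EReal) ≤ tmax := by
  rw [htmax]
  split_ifs with h1 h2 h3
  · obtain ⟨rfl, hb⟩ := h1
    rw [abs_zero, add_zero, Real.sqrt_sq hb.le]
  · obtain ⟨hΔ, hb⟩ := h2
    rw [EReal.coe_le_coe_iff, abs_of_pos hΔ]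
    have hs : 0 < Real.sqrt Δ := Real.sqrt_pos.mpr hΔ
    set s := Real.sqrt Δ with hsdef
    have hb0 : 0 < b := hs.trans hb
    have hbr : b ≤ Real.sqrt (b ^ 2 + Δ) := Real.le_sqrt_of_sq_le (by linarith)
    have hlog : 2 * (s / b) ≤ Real.log ((b + s) / (b - s)) := by
      have h := Real.sum_range_le_log_div (x := s / b) (by positivity)
        ((div_lt_one hb0).mpr hb) 1
      have e : (1 + s / b) / (1 - s / b) = (b + s) / (b - s) := by
        have : b - s ≠ 0 := by linarith
        have h' : 1 - s / b ≠ 0 := by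
          have := (div_lt_one hb0).mpr hb
          linarith
        field_simp
      rw [e] at h
      simp at h
      linarith
    calc 2 / Real.sqrt (b ^ 2 + Δ) ≤ 2 / b := by gcongr
      _ = 1 / s * (2 * (s / b)) := by field_simp
      _ ≤ _ := by gcongr
  · rw [EReal.coe_le_coe_iff, abs_of_neg h3]
    have hs : 0 < Real.sqrt (-Δ) := Real.sqrt_pos.mpr (by linarith)
    have hsq : Real.sqrt (-Δ) ^ 2 = -Δ := Real.sq_sqrt (by linarith)
    set s := Real.sqrt (-Δ) with hsdef
    have h0 : 0 ≤ arccot (b / s) := by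
      have := Real.arctan_lt_pi_div_two (b / s)
      unfold arccot
      linarith
    have h := Real.sin_le h0
    have e : Real.sqrt (1 + (b / s) ^ 2) = Real.sqrt (b ^ 2 + -Δ) / s := by
      rw [← hsq, eq_div_iff hs.ne', ← Real.sqrt_sq hs.le, ← Real.sqrt_mul (by positivity),
        Real.sqrt_sq hs.le]
      congr 1
      field_simp
      ring
    have e2 : Real.sin (arccot (b / s)) = s / Real.sqrt (b ^ 2 + -Δ) := by
      rw [arccot, Real.sin_pi_div_two_sub, Real.cos_arctan, e, one_div_div]
    rw [e2] at h
    calc 2 / Real.sqrt (b ^ 2 + -Δ) = 2 / s * (s / Real.sqrt (b ^ 2 + -Δ)) := by field_simp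
      _ ≤ _ := by gcongr
  · exact le_top
end

section
/- Let a, b, c ∈ ℝ and set Δ = b² − 4ac. Let ε > 0 and let w : [0, ε) → ℝ be differentiable with w(0) = 0 and w'(t) = a·w(t)² + b·w(t) + c for all t ∈ [0, ε). Then, as h → 0⁺, w(h) − [2ch/(2 − bh) − h³·c·Δ/(3(2 − bh)²)] = O(h⁴); that is, the third-case formula Φ(h,y) = y + 2c·h/(2 − b·h) − h³·c·Δ/(3(2 − b·h)²) of the quadratic Taylor method agrees with the exact solution of the quadratic-coefficient initial value problem to third order in the step size h, so the local truncation error of this formula is still O(h⁴). -/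
open Filter Topology Asymptotics

theorem bigO_integrate (ε : ℝ) (hε : 0 < ε) (f f' : ℝ → ℝ) (n : ℕ) (hf0 : f 0 = 0)
    (hf : ∀ t ∈ Set.Ico (0 : ℝ) ε, HasDerivWithinAt f (f' t) (Set.Ico (0 : ℝ) ε) t)
    (hO : f' =O[𝓝[≥] 0] fun t : ℝ => t ^ n) :
    f =O[𝓝[≥] 0] fun t : ℝ => t ^ (n + 1) := by
  obtain ⟨C, hC, hb⟩ := hO.exists_pos
  rw [IsBigOWith] at hb
  obtain ⟨u, hu, hsub⟩ := (mem_nhdsGE_iff_exists_Ico_subset).1 hb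
  have hu' : (0 : ℝ) < u := hu
  refine IsBigO.of_bound C ?_
  filter_upwards [Ico_mem_nhdsGE (lt_min hu' hε)] with h hh
  obtain ⟨h0, h1⟩ := hh
  have hIcc : Set.Icc 0 h ⊆ Set.Ico 0 ε :=
    fun x hx => ⟨hx.1, lt_of_le_of_lt hx.2 (lt_of_lt_of_le h1 (min_le_right _ _))⟩
  have key := (convex_Icc (0 : ℝ) h).norm_image_sub_le_of_norm_hasDerivWithin_le
    (f := f) (f' := f') (C := C * h ^ n) (x := 0) (y := h)
    (fun x hx => (hf x (hIcc hx)).mono hIcc)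
    (fun x hx => by
      have hx2 : ‖f' x‖ ≤ C * ‖x ^ n‖ :=
        hsub ⟨hx.1, lt_of_le_of_lt hx.2 (lt_of_lt_of_le h1 (min_le_left _ _))⟩
      refine hx2.trans ?_
      rw [Real.norm_of_nonneg (pow_nonneg hx.1 n)]
      have := pow_le_pow_left₀ hx.1 hx.2 n
      gcongr)
    ⟨le_rfl, h0⟩ ⟨h0, le_rfl⟩
  rw [hf0, sub_zero, sub_zero, Real.norm_of_nonneg h0] at key
  rw [Real.norm_of_nonneg (pow_nonneg h0 _), pow_succ]
  linarith

/-- The third-case formula `Φ(h,y) = y + 2ch/(2 − bh) − h³cΔ/(3(2 − bh)²)` of the quadratic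
Taylor method agrees with the exact solution of the quadratic-coefficient IVP
`ẇ = aw² + bw + c`, `w(0) = 0` to third order in the step size: the difference is `O(h⁴)`
as `h → 0⁺`. -/
theorem third_case_formula_O4
    (a b c : ℝ) (ε : ℝ) (hε : 0 < ε) (w : ℝ → ℝ)
    (hw0 : w 0 = 0)
    (hw : ∀ t ∈ Set.Ico (0 : ℝ) ε,
      HasDerivWithinAt w (a * w t ^ 2 + b * w t + c) (Set.Ico (0 : ℝ) ε) t) :
    (fun h : ℝ => w h -
        (2 * c * h / (2 - b * h) -
          h ^ 3 * c * (b ^ 2 - 4 * a * c) / (3 * (2 - b * h) ^ 2)))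
      =O[𝓝[>] 0] fun h : ℝ => h ^ 4 := by
  have mono : ∀ t ∈ Set.Ico (0 : ℝ) ε, ∀ (k : ℝ) (n : ℕ), HasDerivWithinAt
      (fun t : ℝ => k * t ^ n) (k * (n * t ^ (n - 1))) (Set.Ico (0 : ℝ) ε) t := by
    intro t _ k n
    exact ((hasDerivAt_pow n t).const_mul k).hasDerivWithinAt
  have h0mem : (0 : ℝ) ∈ Set.Ico (0 : ℝ) ε := ⟨le_rfl, hε⟩
  have hcont : Tendsto w (𝓝[≥] 0) (𝓝 0) := by
    have := (hw 0 h0mem).continuousWithinAt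
    rw [ContinuousWithinAt, hw0, nhdsWithin_Ico_eq_nhdsGE hε] at this
    exact this
  have w0 : w =O[𝓝[≥] 0] fun t : ℝ => t ^ 0 := by
    simpa using hcont.isBigO_one ℝ
  have e0 : (fun t => a * w t ^ 2 + b * w t + c) =O[𝓝[≥] 0] fun t : ℝ => t ^ 0 := by
    have h : Tendsto (fun t => a * w t ^ 2 + b * w t + c) (𝓝[≥] 0)
      (𝓝 (a * 0 ^ 2 + b * 0 + c)) :=
      (((hcont.pow 2).const_mul a).add (hcont.const_mul b)).add_const c
    simpa using h.isBigO_one ℝ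
  have w1 := bigO_integrate ε hε w _ 0 hw0 hw e0
  have idO : (fun t : ℝ => t) =O[𝓝[≥] 0] fun t : ℝ => t ^ 1 := by
    simpa using isBigO_refl (fun t : ℝ => t) (𝓝[≥] 0)
  have sq : (fun t => a * w t ^ 2) =O[𝓝[≥] 0] fun t : ℝ => t ^ 2 := by
    simpa using (w1.pow 2).const_mul_left a
  have down : (fun t : ℝ => t ^ 2) =O[𝓝[≥] 0] fun t : ℝ => t ^ 1 :=
    ((isLittleO_pow_pow (𝕜 := ℝ) (by norm_num : 1 < 2)).isBigO).mono nhdsWithin_le_nhds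
  have w2 : (fun t => w t - c * t ^ 1) =O[𝓝[≥] 0] fun t : ℝ => t ^ 2 := by
    refine bigO_integrate ε hε _ (fun t => a * w t ^ 2 + b * w t) 1 (by simp [hw0]) ?_ ?_
    · intro t ht
      refine ((hw t ht).sub (mono t ht c 1)).congr_deriv ?_
      simp
    · exact (sq.trans down).add (w1.const_mul_left b)
  have w3 : (fun t => w t - c * t ^ 1 - (b * c / 2) * t ^ 2) =O[𝓝[≥] 0]
      fun t : ℝ => t ^ 3 := by
    refine bigO_integrate ε hε _ (fun t => a * w t ^ 2 + b * (w t - c * t ^ 1)) 2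
      (by simp [hw0]) ?_ ?_
    · intro t ht
      refine (((hw t ht).sub (mono t ht c 1)).sub (mono t ht (b * c / 2) 2)).congr_deriv ?_
      norm_num
      ring
    · exact sq.add (w2.const_mul_left b)
  have w4 : (fun t => w t - c * t ^ 1 - (b * c / 2) * t ^ 2
      - ((2 * a * c ^ 2 + b ^ 2 * c) / 6) * t ^ 3) =O[𝓝[≥] 0] fun t : ℝ => t ^ 4 := by
    refine bigO_integrate ε hε _ (fun t => a * ((w t - c * t ^ 1) * (w t + c * t))
      + b * (w t - c * t ^ 1 - (b * c / 2) * t ^ 2)) 3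
      (by simp [hw0]) ?_ ?_
    · intro t ht
      refine ((((hw t ht).sub (mono t ht c 1)).sub (mono t ht (b * c / 2) 2)).sub
        (mono t ht ((2 * a * c ^ 2 + b ^ 2 * c) / 6) 3)).congr_deriv ?_
      norm_num
      ring
    · refine IsBigO.add ?_ (w3.const_mul_left b)
      have := (w2.mul (w1.add (idO.const_mul_left c))).const_mul_left a
      refine this.congr_right ?_
      intro t
      ring
  have w4' := w4.mono (nhdsWithin_mono 0 Set.Ioi_subset_Ici_self)
  have hden : Tendsto (fun h : ℝ => 2 - b * h) (𝓝[>] 0) (𝓝 2) := by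
    have : ContinuousAt (fun h : ℝ => 2 - b * h) 0 := by fun_prop
    have h2 := this.tendsto.mono_left (nhdsWithin_le_nhds (s := Set.Ioi 0))
    simpa using h2
  have hne : ∀ᶠ h in 𝓝[>] (0 : ℝ), 2 - b * h ≠ 0 := hden.eventually_ne (by norm_num)
  have hq : (fun h : ℝ => (3 * (-4 * b * ((2 * a * c ^ 2 + b ^ 2 * c) / 6) + b ^ 3 * c / 2)
      + 3 * b ^ 2 * ((2 * a * c ^ 2 + b ^ 2 * c) / 6) * h) / (3 * (2 - b * h) ^ 2))
      =O[𝓝[>] 0] fun _ : ℝ => (1 : ℝ) := by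
    have hc : ContinuousAt (fun h : ℝ =>
      (3 * (-4 * b * ((2 * a * c ^ 2 + b ^ 2 * c) / 6) + b ^ 3 * c / 2)
      + 3 * b ^ 2 * ((2 * a * c ^ 2 + b ^ 2 * c) / 6) * h) / (3 * (2 - b * h) ^ 2)) 0 := by
      refine ContinuousAt.div (by fun_prop) (by fun_prop) (by norm_num)
    exact (hc.tendsto.mono_left (nhdsWithin_le_nhds (s := Set.Ioi 0))).isBigO_one ℝ
  have hrest := hq.mul (isBigO_refl (fun h : ℝ => h ^ 4) (𝓝[>] 0))
  simp only [one_mul] at hrest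
  refine (w4'.add hrest).congr' ?_ EventuallyEq.rfl
  filter_upwards [hne] with h hh
  obtain ⟨d, hd⟩ : ∃ d, d = 2 - b * h := ⟨_, rfl⟩
  rw [← hd] at hh ⊢
  field_simp
  rw [hd]
  ring
end
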